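/- arXiv:2212.12900 — 3 statements merged into one kernel-verified Lean document; each statement's English description precedes it below -/
import Mathlib

section
/- Let $R_1$ be a commutative local ring with unity and let $a_1, a_2 \in R_1$ satisfy $a_1 \notin R_1 a_2$ and $a_2 \notin R_1 a_1$ (as happens when the maximal ideal of $R_1$ is not principal and $a_1, a_2$ are part of a minimal generating set). Let $F_2, F_3$ be fields. Then $\Gamma_r(R_1 \times F_2 \times F_3)$ contains $K_{5,5}$ as a subgraph, with parts $X = \{(a_1)\times F_2 \times F_3,\ (a_1+a_2)\times(0)\times F_3,\ (a_1)\times(0)\times F_3,\ (a_1)\times F_2\times(0),\ (a_1)\times(0)\times(0)\}$ and $Y = \{(a_2)\times F_2\times F_3,\ (a_1+a_2)\times F_2\times(0),\ (a_2)\times(0)\times F_3,\ (a_2)\times F_2\times(0),\ (a_2)\times(0)\times(0)\}$. -/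
/-- Adjacency in the reduced cozero-divisor graph `Γ_r(R)`:
the two ideals are nontrivial principal ideals (vertices of the graph),
they are distinct, and neither is properly contained in the other. -/
def redCozeroAdj {R : Type*} [CommRing R] (I J : Ideal R) : Prop :=
  (I.IsPrincipal ∧ I ≠ ⊥ ∧ I ≠ ⊤) ∧ (J.IsPrincipal ∧ J ≠ ⊥ ∧ J ≠ ⊤) ∧
    I ≠ J ∧ ¬ I < J ∧ ¬ J < I

/-!
Between principal ideals, adjacency in `Γ_r(R)` is incomparability of the generators under
divisibility, since zero and the units are comparable with every element. In a product ring it is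
enough that one coordinate is incomparable. In a local ring `a₁`, `a₂` and `a₁ + a₂` are pairwise
incomparable: if `a₁ = r (a₁ + a₂)`, then `r a₂ = (1 - r) a₁`, and `r` or `1 - r` is a unit. So the
first coordinate settles every pair of vertices except the two with first coordinate `a₁ + a₂`,
which are settled by the incomparability of `(0, 1)` and `(1, 0)`.
-/

section Incomparability

theorem incompRel_dvd_of_map {M N : Type*} [Monoid M] [Monoid N] (f : M →* N) {x y : M}
    (h : IncompRel (· ∣ ·) (f x) (f y)) : IncompRel (· ∣ ·) x y :=
  ⟨fun hxy => h.1 (map_dvd f hxy), fun hyx => h.2 (map_dvd f hyx)⟩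

theorem incompRel_dvd_zero_one_one_zero (M N : Type*) [MonoidWithZero M] [MonoidWithZero N]
    [Nontrivial M] [Nontrivial N] :
    IncompRel (· ∣ ·) ((0, 1) : M × N) (1, 0) := by
  simp [IncompRel, prod_dvd_iff]

variable {R : Type*} [CommRing R] [IsLocalRing R] {a b : R}

theorem incompRel_dvd_add_right_of_isLocalRing (h : IncompRel (· ∣ ·) a b) :
    IncompRel (· ∣ ·) a (a + b) := by
  refine ⟨fun hdvd => h.1 ((dvd_add_right dvd_rfl).1 hdvd), ?_⟩
  rintro ⟨r, hr⟩
  have key : b * r = a * (1 - r) := by linear_combination -hr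
  rcases IsLocalRing.isUnit_or_isUnit_one_sub_self r with hunit | hunit
  · exact h.1 (hunit.dvd_mul_right.1 ⟨1 - r, key⟩)
  · exact h.2 (hunit.dvd_mul_right.1 ⟨r, key.symm⟩)

theorem incompRel_dvd_add_left_of_isLocalRing (h : IncompRel (· ∣ ·) a b) :
    IncompRel (· ∣ ·) b (a + b) :=
  add_comm b a ▸ incompRel_dvd_add_right_of_isLocalRing h.symm

end Incomparability

section Adjacency

variable {R : Type*} [CommRing R]

theorem redCozeroAdj_iff_incompRel {I J : Ideal R} (hI : I.IsPrincipal) (hJ : J.IsPrincipal) :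
    redCozeroAdj I J ↔ IncompRel (· ≤ ·) I J := by
  constructor
  · rintro ⟨-, -, hne, hIJ, hJI⟩
    exact ⟨fun hle => hIJ (hle.lt_of_ne hne), fun hle => hJI (hle.lt_of_ne hne.symm)⟩
  · rintro ⟨hIJ, hJI⟩
    refine ⟨⟨hI, ?_, ?_⟩, ⟨hJ, ?_, ?_⟩, ?_, fun hlt => hIJ hlt.le, fun hlt => hJI hlt.le⟩
    · exact fun h => hIJ (h ▸ bot_le)
    · exact fun h => hJI (h ▸ le_top)
    · exact fun h => hJI (h ▸ bot_le)
    · exact fun h => hIJ (h ▸ le_top)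
    · exact fun h => hIJ h.le

theorem redCozeroAdj_span_singleton_iff {x y : R} :
    redCozeroAdj (Ideal.span {x}) (Ideal.span {y}) ↔ IncompRel (· ∣ ·) x y := by
  rw [redCozeroAdj_iff_incompRel ⟨x, rfl⟩ ⟨y, rfl⟩, incompRel_comm]
  simp only [IncompRel, Ideal.span_singleton_le_span_singleton]

end Adjacency

section PartGenerators

variable {R S T : Type*}

/-- Generators of the five ideals forming one part of the `K_{5,5}` in `Γ_r(R × S × T)`: the
element `a` paired with each idempotent `(0 or 1, 0 or 1)` of `S × T`, and one exceptional
generator `(c, u)`, placed at index `1`. -/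
def partGenerators [Zero S] [One S] [Zero T] [One T] (a c : R) (u : S × T) :
    Fin 5 → R × S × T :=
  ![(a, 1, 1), (c, u), (a, 0, 1), (a, 1, 0), (a, 0, 0)]

theorem partGenerators_fst [Zero S] [One S] [Zero T] [One T] (a c : R) (u : S × T) (i : Fin 5) :
    (partGenerators a c u i).1 = if i = 1 then c else a := by
  fin_cases i <;> rfl

theorem injective_span_partGenerators [CommRing R] [CommRing S] [CommRing T] [Nontrivial S]
    [Nontrivial T] {a c : R} (hac : ¬ a ∣ c) (u : S × T) :
    Function.Injective fun i => Ideal.span {partGenerators a c u i} := by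
  intro i j hij
  have hdvd := And.intro (Ideal.span_singleton_le_span_singleton.1 hij.le)
    (Ideal.span_singleton_le_span_singleton.1 hij.ge)
  fin_cases i <;> fin_cases j <;>
    simp [partGenerators, prod_dvd_iff, hac] at hdvd ⊢

theorem incompRel_dvd_partGenerators [Monoid R] [MonoidWithZero S] [MonoidWithZero T]
    {a b c : R} {u v : S × T} (hab : IncompRel (· ∣ ·) a b) (hac : IncompRel (· ∣ ·) a c)
    (hbc : IncompRel (· ∣ ·) b c) (huv : IncompRel (· ∣ ·) u v) (i j : Fin 5) :
    IncompRel (· ∣ ·) (partGenerators a c u i) (partGenerators b c v j) := by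
  by_cases hexc : i = 1 ∧ j = 1
  · obtain ⟨rfl, rfl⟩ := hexc
    exact incompRel_dvd_of_map (MonoidHom.snd R (S × T)) huv
  · apply incompRel_dvd_of_map (MonoidHom.fst R (S × T))
    simp only [MonoidHom.coe_fst, partGenerators_fst]
    split_ifs with hi hj hj
    · exact absurd ⟨hi, hj⟩ hexc
    · exact hbc.symm
    · exact hac
    · exact hab

end PartGenerators

theorem stmt1_general {R S T : Type*} [CommRing R] [CommRing S] [CommRing T]
    [Nontrivial S] [Nontrivial T] {a b c : R} (hab : IncompRel (· ∣ ·) a b)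
    (hac : IncompRel (· ∣ ·) a c) (hbc : IncompRel (· ∣ ·) b c)
    {X Y : Fin 5 → Ideal (R × S × T)}
    (hX : X = ![Ideal.span {(a, (1 : S), (1 : T))},
                Ideal.span {(c, (0 : S), (1 : T))},
                Ideal.span {(a, (0 : S), (1 : T))},
                Ideal.span {(a, (1 : S), (0 : T))},
                Ideal.span {(a, (0 : S), (0 : T))}])
    (hY : Y = ![Ideal.span {(b, (1 : S), (1 : T))},
                Ideal.span {(c, (1 : S), (0 : T))},
                Ideal.span {(b, (0 : S), (1 : T))},
                Ideal.span {(b, (1 : S), (0 : T))},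
                Ideal.span {(b, (0 : S), (0 : T))}]) :
    Function.Injective X ∧ Function.Injective Y ∧ (∀ i j, X i ≠ Y j) ∧
      ∀ i j, redCozeroAdj (X i) (Y j) := by
  obtain rfl : X = fun i => Ideal.span {partGenerators a c (0, 1) i} := by
    rw [hX]; ext1 i; fin_cases i <;> rfl
  obtain rfl : Y = fun i => Ideal.span {partGenerators b c (1, 0) i} := by
    rw [hY]; ext1 i; fin_cases i <;> rfl
  have hadj (i j : Fin 5) : redCozeroAdj (Ideal.span {partGenerators a c ((0, 1) : S × T) i})
      (Ideal.span {partGenerators b c (1, 0) j}) :=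
    redCozeroAdj_span_singleton_iff.2 <|
      incompRel_dvd_partGenerators hab hac hbc (incompRel_dvd_zero_one_one_zero S T) i j
  exact ⟨injective_span_partGenerators hac.1 _, injective_span_partGenerators hbc.1 _,
    fun i j => (hadj i j).2.2.1, hadj⟩

/-- Let `R₁` be a commutative local ring and `a₁ a₂ ∈ R₁` with `a₁ ∉ R₁a₂` and
`a₂ ∉ R₁a₁`, and let `F₂`, `F₃` be fields.  Then `Γ_r(R₁ × F₂ × F₃)` contains
`K_{5,5}` as a subgraph with the indicated parts `X` and `Y`. -/
theorem stmt1 (R₁ F₂ F₃ : Type*) [CommRing R₁] [IsLocalRing R₁] [Field F₂] [Field F₃]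
    (a₁ a₂ : R₁) (h₁ : a₁ ∉ Ideal.span {a₂}) (h₂ : a₂ ∉ Ideal.span {a₁})
    (X Y : Fin 5 → Ideal (R₁ × F₂ × F₃))
    (hX : X = ![Ideal.span {(a₁, (1 : F₂), (1 : F₃))},
                Ideal.span {(a₁ + a₂, (0 : F₂), (1 : F₃))},
                Ideal.span {(a₁, (0 : F₂), (1 : F₃))},
                Ideal.span {(a₁, (1 : F₂), (0 : F₃))},
                Ideal.span {(a₁, (0 : F₂), (0 : F₃))}])
    (hY : Y = ![Ideal.span {(a₂, (1 : F₂), (1 : F₃))},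
                Ideal.span {(a₁ + a₂, (1 : F₂), (0 : F₃))},
                Ideal.span {(a₂, (0 : F₂), (1 : F₃))},
                Ideal.span {(a₂, (1 : F₂), (0 : F₃))},
                Ideal.span {(a₂, (0 : F₂), (0 : F₃))}]) :
    Function.Injective X ∧ Function.Injective Y ∧ (∀ i j, X i ≠ Y j) ∧
      ∀ i j, redCozeroAdj (X i) (Y j) := by
  have hinc : IncompRel (· ∣ ·) a₁ a₂ :=
    ⟨mt Ideal.mem_span_singleton.2 h₂, mt Ideal.mem_span_singleton.2 h₁⟩
  exact stmt1_general hinc (incompRel_dvd_add_right_of_isLocalRing hinc)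
    (incompRel_dvd_add_left_of_isLocalRing hinc) hX hY
end

section
/- Let $R_1, R_2, R_3$ be commutative rings with unity, each of cardinality at least $3$, and choose $u \in R_1 \setminus \{0,1\}$, $v \in R_2 \setminus \{0,1\}$, $w \in R_3 \setminus \{0,1\}$. Then $\Gamma'(R_1 \times R_2 \times R_3)$ contains $K_{5,5}$ as a subgraph, with parts $\{(0,1,0), (0,1,1), (0,1,w), (0,v,0), (0,v,1)\}$ and $\{(1,0,0), (1,0,1), (1,0,w), (u,0,0), (u,0,1)\}$. -/
/-- Adjacency in the cozero-divisor graph `Γ'(R)`: both elements are vertices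
(non-zero non-units) and neither lies in the principal ideal generated by the
other. -/
def cozeroAdj {R : Type*} [CommRing R] (x y : R) : Prop :=
  (x ≠ 0 ∧ ¬ IsUnit x) ∧ (y ≠ 0 ∧ ¬ IsUnit y) ∧
    x ∉ Ideal.span {y} ∧ y ∉ Ideal.span {x}

/-!
`x ∉ Ry` and `y ∉ Rx` already force `x` and `y` to be non-zero non-units. Both relations hold as
soon as one ring homomorphism kills `x` but not `y` and another kills `y` but not `x`. On the two
parts of the `K_{5,5}` these are the first two projections of `R₁ × R₂ × R₃`.
-/

section CozeroAdj

variable {R S T : Type*} [CommRing R] [Semiring S] [Semiring T] {x y : R}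

theorem cozeroAdj_iff : cozeroAdj x y ↔ x ∉ Ideal.span {y} ∧ y ∉ Ideal.span {x} := by
  refine ⟨fun h => h.2.2, fun ⟨hxy, hyx⟩ => ⟨⟨?_, ?_⟩, ⟨?_, ?_⟩, hxy, hyx⟩⟩
  · rintro rfl
    exact hxy (zero_mem _)
  · exact fun hx => hyx (Ideal.mem_span_singleton.2 hx.dvd)
  · rintro rfl
    exact hyx (zero_mem _)
  · exact fun hy => hxy (Ideal.mem_span_singleton.2 hy.dvd)

theorem cozeroAdj.ne (h : cozeroAdj x y) : x ≠ y := by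
  rintro rfl
  exact (cozeroAdj_iff.1 h).1 (Ideal.mem_span_singleton_self x)

theorem notMem_span_singleton_of_map_eq_zero (f : R →+* S) (hx : f x = 0) (hy : f y ≠ 0) :
    y ∉ Ideal.span {x} := fun hmem =>
  hy (zero_dvd_iff.1 (hx ▸ map_dvd f (Ideal.mem_span_singleton.1 hmem)))

theorem cozeroAdj_of_map_eq_zero (f : R →+* S) (g : R →+* T) (hfx : f x = 0) (hfy : f y ≠ 0)
    (hgx : g x ≠ 0) (hgy : g y = 0) : cozeroAdj x y :=
  cozeroAdj_iff.2 ⟨notMem_span_singleton_of_map_eq_zero g hgy hgx,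
    notMem_span_singleton_of_map_eq_zero f hfx hfy⟩

end CozeroAdj

theorem cozeroAdj_zero_left_zero_middle {R₁ R₂ R₃ : Type*} [CommRing R₁] [CommRing R₂]
    [CommRing R₃] {a : R₁} {b : R₂} (ha : a ≠ 0) (hb : b ≠ 0) (c d : R₃) :
    cozeroAdj ((0, b, c) : R₁ × R₂ × R₃) (a, 0, d) :=
  cozeroAdj_of_map_eq_zero (RingHom.fst R₁ (R₂ × R₃))
    ((RingHom.fst R₂ R₃).comp (RingHom.snd R₁ (R₂ × R₃))) rfl ha hb rfl

section PartCoords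

variable {S T : Type*} [One S] [Zero T] [One T]

/-- The five vertices of one part of the `K_{5,5}`, with the coordinate that vanishes on the whole
part omitted. The part `A` is `(0, s, t)` for `(s, t)` in `partCoords v w`, and the part `B` is
`(s, 0, t)` for `(s, t)` in `partCoords u w`. -/
def partCoords (a : S) (c : T) : Fin 5 → S × T :=
  ![(1, 0), (1, 1), (1, c), (a, 0), (a, 1)]

theorem partCoords_injective [NeZero (1 : T)] {a : S} {c : T} (ha : a ≠ 1) (hc0 : c ≠ 0)
    (hc1 : c ≠ 1) : Function.Injective (partCoords a c) :=
  List.nodup_ofFn.1 (by simp [partCoords, ha.symm, hc0.symm, hc1.symm])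

theorem fst_partCoords_ne_zero [Zero S] [NeZero (1 : S)] {a : S} (ha : a ≠ 0) (c : T) (i : Fin 5) :
    (partCoords a c i).1 ≠ 0 := by
  fin_cases i <;> simp [partCoords, ha]

end PartCoords

/-- Let `R₁, R₂, R₃` be commutative rings with unity, each of cardinality at
least `3`, and `u ∈ R₁ \ {0,1}`, `v ∈ R₂ \ {0,1}`, `w ∈ R₃ \ {0,1}`.  Then
`Γ'(R₁ × R₂ × R₃)` contains `K_{5,5}` as a subgraph with the indicated parts. -/
theorem stmt2 (R₁ R₂ R₃ : Type*) [CommRing R₁] [CommRing R₂] [CommRing R₃]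
    (hc₁ : 3 ≤ Cardinal.mk R₁) (hc₂ : 3 ≤ Cardinal.mk R₂) (hc₃ : 3 ≤ Cardinal.mk R₃)
    (u : R₁) (hu0 : u ≠ 0) (hu1 : u ≠ 1)
    (v : R₂) (hv0 : v ≠ 0) (hv1 : v ≠ 1)
    (w : R₃) (hw0 : w ≠ 0) (hw1 : w ≠ 1)
    (A B : Fin 5 → R₁ × R₂ × R₃)
    (hA : A = ![(0, 1, 0), (0, 1, 1), (0, 1, w), (0, v, 0), (0, v, 1)])
    (hB : B = ![(1, 0, 0), (1, 0, 1), (1, 0, w), (u, 0, 0), (u, 0, 1)]) :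
    Function.Injective A ∧ Function.Injective B ∧ (∀ i j, A i ≠ B j) ∧
      ∀ i j, cozeroAdj (A i) (B j) := by
  have : Nontrivial R₁ := ⟨u, 0, hu0⟩
  have : Nontrivial R₂ := ⟨v, 0, hv0⟩
  have : Nontrivial R₃ := ⟨w, 0, hw0⟩
  have hA_coords : A = fun i => (0, partCoords v w i) := by
    rw [hA]; funext i; fin_cases i <;> rfl
  have hB_coords : B = fun i => ((partCoords u w i).1, 0, (partCoords u w i).2) := by
    rw [hB]; funext i; fin_cases i <;> rfl
  have hAB (i j) : cozeroAdj (A i) (B j) := by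
    rw [hA_coords, hB_coords]
    exact cozeroAdj_zero_left_zero_middle (fst_partCoords_ne_zero hu0 w j)
      (fst_partCoords_ne_zero hv0 w i) _ _
  refine ⟨?_, ?_, fun i j => (hAB i j).ne, hAB⟩
  · rw [hA_coords]
    exact (Prod.mk_right_injective 0).comp (partCoords_injective hv1 hw0 hw1)
  · intro i j hij
    simp only [hB_coords, Prod.mk.injEq, true_and] at hij
    exact partCoords_injective hu1 hw0 hw1 (Prod.ext hij.1 hij.2)
end

section
/- Let $R_1, R_2$ be commutative local rings with unity whose maximal ideals are principal, generated by $a$ and $b$ respectively, each with nilpotent index $3$ (i.e., $a^2 \neq 0$, $a^3 = 0$, $b^2 \neq 0$, $b^3 = 0$). Then $\Gamma_r(R_1 \times R_2)$ contains $K_{4,4}$ as a subgraph, with parts $\{R_1\times(0),\ (a)\times(0),\ R_1\times(b^2),\ (a)\times(b^2)\}$ and $\{(0)\times R_2,\ (0)\times(b),\ (a^2)\times R_2,\ (a^2)\times(b)\}$. -/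
/-!
For `u` in the upper part `{1, a}` and `l` in the lower part `{0, a²}` of the chain
`0 ⊂ (a²) ⊂ (a) ⊂ R₁` we never have `l ∣ u`: it would give `a² ∣ l ∣ u ∣ a`, whereas
`a = a² c` would imply `a² = a³ c = 0`. The first part of the bipartite graph pairs upper elements
of `R₁` with lower elements of `R₂`, the second pairs lower with upper. Thus no ideal of the
first part lies in one of the second, by the first coordinate, nor conversely, by the second
coordinate.
-/

section Adjacency

variable {R S : Type*} [CommRing R] [CommRing S]

theorem redCozeroAdj_of_not_le {I J : Ideal R} (hI : I.IsPrincipal) (hJ : J.IsPrincipal)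
    (hIJ : ¬ I ≤ J) (hJI : ¬ J ≤ I) : redCozeroAdj I J := by
  refine ⟨⟨hI, ?_, ?_⟩, ⟨hJ, ?_, ?_⟩, fun h => hIJ h.le, fun h => hIJ h.le, fun h => hJI h.le⟩
  · rintro rfl; exact hIJ bot_le
  · rintro rfl; exact hJI le_top
  · rintro rfl; exact hJI bot_le
  · rintro rfl; exact hIJ le_top

theorem span_prodMk_le_span_prodMk {x x' : R} {y y' : S} :
    Ideal.span {(x, y)} ≤ Ideal.span {(x', y')} ↔ x' ∣ x ∧ y' ∣ y := by
  rw [Ideal.span_singleton_le_span_singleton, Prod.mk_dvd_mk]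

theorem redCozeroAdj_span_prodMk {x x' : R} {y y' : S} (hx : ¬ x' ∣ x) (hy : ¬ y ∣ y') :
    redCozeroAdj (Ideal.span {(x, y)}) (Ideal.span {(x', y')}) :=
  redCozeroAdj_of_not_le ⟨_, rfl⟩ ⟨_, rfl⟩
    (fun h => hx (span_prodMk_le_span_prodMk.1 h).1)
    (fun h => hy (span_prodMk_le_span_prodMk.1 h).2)

end Adjacency

section Injectivity

variable {R S : Type*} [CommRing R] [CommRing S]

theorem span_prodMk_eq_prod_span (x : R) (y : S) :
    Ideal.span {(x, y)} = (Ideal.span {x}).prod (Ideal.span {y}) := by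
  rw [← Ideal.span_prod (by simp), Set.singleton_prod_singleton]

theorem injective_span_prodMk {ι κ : Type*} {x : ι → R} {y : κ → S}
    (hx : Function.Injective fun i => Ideal.span {x i})
    (hy : Function.Injective fun j => Ideal.span {y j}) :
    Function.Injective fun p : ι × κ => Ideal.span {(x p.1, y p.2)} := by
  simp only [span_prodMk_eq_prod_span]
  exact Ideal.idealProdEquiv.symm.injective.comp (hx.prodMap hy)

theorem injective_span_pair {x y : R} (h : Ideal.span {x} ≠ Ideal.span {y}) :
    Function.Injective fun i => Ideal.span {![x, y] i} := by
  simpa [Function.Injective, Fin.forall_fin_two] using ⟨h, h.symm⟩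

theorem injective_span_one_pair {a : R} (ha : ¬ IsUnit a) :
    Function.Injective fun i => Ideal.span {![1, a] i} :=
  injective_span_pair fun h => ha <| Ideal.span_singleton_eq_top.1 <|
    h.symm.trans Ideal.span_singleton_one

theorem injective_span_zero_pair {c : R} (hc : c ≠ 0) :
    Function.Injective fun i => Ideal.span {![0, c] i} :=
  injective_span_pair fun h => hc <| Ideal.span_singleton_eq_bot.1 <|
    h.symm.trans Ideal.span_zero

end Injectivity

section Divisibility

variable {R : Type*} [CommRing R]

theorem not_zero_pair_dvd_one_pair {a c : R} (h : ¬ c ∣ a) (i j : Fin 2) :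
    ¬ ![0, c] i ∣ ![1, a] j := by
  have dvd_lower : c ∣ ![0, c] i := by fin_cases i <;> simp
  have upper_dvd : ![1, a] j ∣ a := by fin_cases j <;> simp
  exact fun hij => h (dvd_lower.trans (hij.trans upper_dvd))

theorem not_isUnit_of_not_sq_dvd_self {a : R} (h : ¬ a ^ 2 ∣ a) : ¬ IsUnit a :=
  fun ha => h (ha.pow 2).dvd

theorem not_sq_dvd_self_of_pow_three_eq_zero {a : R} (h2 : a ^ 2 ≠ 0) (h3 : a ^ 3 = 0) :
    ¬ a ^ 2 ∣ a := by
  rintro ⟨c, hc⟩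
  apply h2
  calc a ^ 2 = a * a := sq a
    _ = a * (a ^ 2 * c) := by rw [← hc]
    _ = a ^ 3 * c := by ring
    _ = 0 := by rw [h3, zero_mul]

end Divisibility

theorem stmt15_general {R₁ R₂ : Type*} [CommRing R₁] [CommRing R₂]
    {a : R₁} (ha2 : a ^ 2 ≠ 0) (ha : ¬ a ^ 2 ∣ a)
    {b : R₂} (hb2 : b ^ 2 ≠ 0) (hb : ¬ b ^ 2 ∣ b)
    (A B : Fin 4 → Ideal (R₁ × R₂))
    (hA : A = ![Ideal.span {((1 : R₁), (0 : R₂))}, Ideal.span {(a, (0 : R₂))},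
                Ideal.span {((1 : R₁), b ^ 2)}, Ideal.span {(a, b ^ 2)}])
    (hB : B = ![Ideal.span {((0 : R₁), (1 : R₂))}, Ideal.span {((0 : R₁), b)},
                Ideal.span {(a ^ 2, (1 : R₂))}, Ideal.span {(a ^ 2, b)}]) :
    Function.Injective A ∧ Function.Injective B ∧ (∀ i j, A i ≠ B j) ∧
      ∀ i j, redCozeroAdj (A i) (B j) := by
  let e : Fin 4 ≃ Fin 2 × Fin 2 := (finProdFinEquiv (m := 2) (n := 2)).symm
  -- `e` enumerates lexicographically, whereas `A` lists its first coordinate fastest.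
  have hA' : A = (fun p => Ideal.span {(![1, a] p.1, ![0, b ^ 2] p.2)}) ∘ Prod.swap ∘ e := by
    subst hA; funext i; fin_cases i <;> rfl
  have hB' : B = (fun p => Ideal.span {(![0, a ^ 2] p.1, ![1, b] p.2)}) ∘ e := by
    subst hB; funext i; fin_cases i <;> rfl
  have adj (i j : Fin 4) : redCozeroAdj (A i) (B j) := by
    rw [hA', hB']
    exact redCozeroAdj_span_prodMk (not_zero_pair_dvd_one_pair ha _ _)
      (not_zero_pair_dvd_one_pair hb _ _)
  refine ⟨?_, ?_, fun i j => (adj i j).2.2.1, adj⟩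
  · rw [hA']
    exact (injective_span_prodMk (injective_span_one_pair (not_isUnit_of_not_sq_dvd_self ha))
      (injective_span_zero_pair hb2)).comp (Prod.swap_injective.comp e.injective)
  · rw [hB']
    exact (injective_span_prodMk (injective_span_zero_pair ha2)
      (injective_span_one_pair (not_isUnit_of_not_sq_dvd_self hb))).comp e.injective

/-- Let `R₁, R₂` be commutative local rings whose maximal ideals are principal,
generated by `a` resp. `b`, each with nilpotent index `3`.  Then
`Γ_r(R₁ × R₂)` contains `K_{4,4}` as a subgraph with parts
`{R₁×(0), (a)×(0), R₁×(b²), (a)×(b²)}` and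
`{(0)×R₂, (0)×(b), (a²)×R₂, (a²)×(b)}`. -/
theorem stmt15 (R₁ R₂ : Type*) [CommRing R₁] [CommRing R₂]
    [IsLocalRing R₁] [IsLocalRing R₂]
    (a : R₁) (hmaxa : IsLocalRing.maximalIdeal R₁ = Ideal.span {a})
    (ha2 : a ^ 2 ≠ 0) (ha3 : a ^ 3 = 0)
    (b : R₂) (hmaxb : IsLocalRing.maximalIdeal R₂ = Ideal.span {b})
    (hb2 : b ^ 2 ≠ 0) (hb3 : b ^ 3 = 0)
    (A B : Fin 4 → Ideal (R₁ × R₂))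
    (hA : A = ![Ideal.span {((1 : R₁), (0 : R₂))}, Ideal.span {(a, (0 : R₂))},
                Ideal.span {((1 : R₁), b ^ 2)}, Ideal.span {(a, b ^ 2)}])
    (hB : B = ![Ideal.span {((0 : R₁), (1 : R₂))}, Ideal.span {((0 : R₁), b)},
                Ideal.span {(a ^ 2, (1 : R₂))}, Ideal.span {(a ^ 2, b)}]) :
    Function.Injective A ∧ Function.Injective B ∧ (∀ i j, A i ≠ B j) ∧
      ∀ i j, redCozeroAdj (A i) (B j) :=
  stmt15_general ha2 (not_sq_dvd_self_of_pow_three_eq_zero ha2 ha3)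
    hb2 (not_sq_dvd_self_of_pow_three_eq_zero hb2 hb3) A B hA hB
end
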